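/- Let n ≥ 1 and let A be an n×n matrix over the integers ℤ, with characteristic polynomial coefficients c_i and Faddeev–Leverrier matrices B_k (B_0 = I, B_k = A·B_{k-1} + c_{n-k}·I). Then for every k with 1 ≤ k ≤ n, the integer k exactly divides Tr(A·B_{k−1}). (This expresses that all divisions in the Faddeev–Leverrier algorithm over ℤ are exact: each divisor is a small integer k and the quotient remains in ℤ.) -/

import Mathlib

noncomputable def flSeq {R : Type*} [CommRing R] {n : ℕ}
    (A : Matrix (Fin n) (Fin n) R) : ℕ → Matrix (Fin n) (Fin n) R
  | 0 => 1
  | k + 1 => A * flSeq A k + (A.charpoly.coeff (n - (k + 1))) • 1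

/-! The matrices `B_k` are the coefficients of the adjugate of `X • I - A`: comparing coefficients
in `(X • I - A) * adj (X • I - A) = p_A • I` gives their recursion, started by the vanishing of the
coefficients of degree at least `n`. By Jacobi's formula the trace of this adjugate is the
derivative of `p_A`, so `Tr B_k = (n - k) c_{n-k}`. Taking the trace of
`B_k = A * B_{k-1} + c_{n-k} • I` then gives `Tr (A * B_{k-1}) = -k c_{n-k}`. -/

section Jacobi

theorem derivation_prod {ι R A M : Type*} [DecidableEq ι] [CommSemiring R] [CommSemiring A]
    [Algebra R A] [AddCommMonoid M] [Module A M] [Module R M] (D : Derivation R A M)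
    (s : Finset ι) (f : ι → A) :
    D (∏ i ∈ s, f i) = ∑ i ∈ s, (∏ j ∈ s.erase i, f j) • D (f i) := by
  induction s using Finset.induction_on with
  | empty => simp
  | insert a s ha ih =>
    have erase_insert_prod : ∀ i ∈ s,
        ∏ j ∈ (insert a s).erase i, f j = f a * ∏ j ∈ s.erase i, f j := fun i hi ↦ by
      rw [Finset.erase_insert_of_ne (ne_of_mem_of_not_mem hi ha).symm,
        Finset.prod_insert fun h ↦ ha (Finset.mem_of_mem_erase h)]
    rw [Finset.prod_insert ha, D.leibniz, ih, Finset.sum_insert ha, Finset.erase_insert ha,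
      add_comm, Finset.smul_sum]
    congr 1
    exact Finset.sum_congr rfl fun i hi ↦ by rw [erase_insert_prod i hi, mul_smul]

variable {m R A : Type*} [Fintype m] [DecidableEq m] [CommSemiring R] [CommRing A] [Algebra R A]

theorem derivation_det_eq_sum_det_updateCol (D : Derivation R A A) (M : Matrix m m A) :
    D M.det = ∑ i, (M.updateCol i fun j ↦ D (M j i)).det := by
  have prod_updateCol (σ : Equiv.Perm m) (i : m) :
      ∏ k, M.updateCol i (fun j ↦ D (M j i)) (σ k) k =
        (∏ k ∈ Finset.univ.erase i, M (σ k) k) • D (M (σ i) i) := by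
    rw [← Finset.prod_erase_mul _ _ (Finset.mem_univ i), Matrix.updateCol_self, smul_eq_mul]
    congr 1
    exact Finset.prod_congr rfl fun k hk ↦ Matrix.updateCol_ne (Finset.ne_of_mem_erase hk)
  simp only [Matrix.det_apply, map_sum, Units.smul_def, map_zsmul, derivation_prod,
    prod_updateCol, Finset.smul_sum]
  exact Finset.sum_comm

theorem derivation_det (D : Derivation R A A) (M : Matrix m m A) :
    D M.det = (M.adjugate * M.map D).trace := by
  rw [derivation_det_eq_sum_det_updateCol]
  refine Finset.sum_congr rfl fun i _ ↦ ?_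
  rw [← Matrix.cramer_apply, Matrix.cramer_eq_adjugate_mulVec]
  rfl

end Jacobi

section CharmatrixAdjugate

open Polynomial

theorem coeff_eq_zero_of_natDegree_X_sub_C_mul_le {S : Type*} [Ring S] {a : S} {q : S[X]} {j : ℕ}
    (hj : ((X - C a) * q).natDegree ≤ j) : q.coeff j = 0 := by
  by_cases hq : q = 0
  · simp [hq]
  · have : Nontrivial S := nontrivial_iff.mp ⟨q, 0, hq⟩
    rw [(monic_X_sub_C a).natDegree_mul' hq, natDegree_X_sub_C] at hj
    exact coeff_eq_zero_of_natDegree_lt (by lia)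

variable {m R : Type*} [Fintype m] [DecidableEq m] [CommRing R]

theorem charmatrix_map_derivative (A : Matrix m m R) :
    A.charmatrix.map derivative = 1 := by
  ext1 i j
  obtain rfl | hij := eq_or_ne i j
  · simp
  · simp [hij]

theorem derivative_charpoly (A : Matrix m m R) :
    derivative A.charpoly = A.charmatrix.adjugate.trace := by
  have jacobi := derivation_det (derivative' (R := R)) A.charmatrix
  have map_derivative : A.charmatrix.map (derivative' (R := R)) = 1 := charmatrix_map_derivative A
  rwa [map_derivative, mul_one] at jacobi

theorem trace_coeff_matPolyEquiv (M : Matrix m m R[X]) (j : ℕ) :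
    ((matPolyEquiv M).coeff j).trace = M.trace.coeff j := by
  simp [Matrix.trace, matPolyEquiv_coeff_apply]

/-- The adjugate of the characteristic matrix `X • I - A`, regarded as a polynomial with matrix
coefficients. For an `n × n` matrix, its coefficient of degree `n - 1 - k` is the Faddeev–Leverrier
matrix `B_k`. -/
noncomputable def adjugatePoly (A : Matrix m m R) : (Matrix m m R)[X] :=
  matPolyEquiv A.charmatrix.adjugate

theorem X_sub_C_mul_adjugatePoly (A : Matrix m m R) :
    (X - C A) * adjugatePoly A = A.charpoly.map (algebraMap R (Matrix m m R)) := by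
  rw [adjugatePoly, ← Matrix.matPolyEquiv_charmatrix, ← map_mul, Matrix.mul_adjugate,
    ← Matrix.charpoly, matPolyEquiv_smul_one]

theorem coeff_X_mul_adjugatePoly (A : Matrix m m R) (j : ℕ) :
    (X * adjugatePoly A).coeff j = A * (adjugatePoly A).coeff j + A.charpoly.coeff j • 1 := by
  have coeff_eq := congrArg (coeff · j) (X_sub_C_mul_adjugatePoly A)
  simp only [sub_mul, coeff_sub, coeff_C_mul, coeff_map, Algebra.algebraMap_eq_smul_one] at coeff_eq
  rw [← coeff_eq, add_sub_cancel]

theorem coeff_adjugatePoly_eq_zero (A : Matrix m m R) {j : ℕ} (hj : Fintype.card m ≤ j) :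
    (adjugatePoly A).coeff j = 0 := by
  nontriviality R
  apply coeff_eq_zero_of_natDegree_X_sub_C_mul_le (a := A)
  rw [X_sub_C_mul_adjugatePoly]
  exact natDegree_map_le.trans (A.charpoly_natDegree_eq_dim.trans_le hj)

theorem trace_coeff_X_mul_adjugatePoly (A : Matrix m m R) (j : ℕ) :
    ((X * adjugatePoly A).coeff j).trace = j * A.charpoly.coeff j := by
  cases j with
  | zero => simp
  | succ j =>
    rw [coeff_X_mul, adjugatePoly, trace_coeff_matPolyEquiv, ← derivative_charpoly,
      coeff_derivative, mul_comm, Nat.cast_succ]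

end CharmatrixAdjugate

section FaddeevLeverrier

open Polynomial

variable {R : Type*} [CommRing R] {n k : ℕ}

-- The factor `X` makes the identity cover `k = n` as well, where it says `B_n = 0`.
theorem flSeq_eq_coeff_X_mul_adjugatePoly (A : Matrix (Fin n) (Fin n) R) (hk : k ≤ n) :
    flSeq A k = (X * adjugatePoly A).coeff (n - k) := by
  induction k with
  | zero =>
    nontriviality R
    have coeff_charpoly : A.charpoly.coeff n = 1 := by
      simpa using A.charpoly_monic.coeff_natDegree
    rw [Nat.sub_zero, coeff_X_mul_adjugatePoly, coeff_adjugatePoly_eq_zero A (by simp),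
      coeff_charpoly, mul_zero, zero_add, one_smul, flSeq]
  | succ k ih =>
    rw [flSeq, ih (by lia), coeff_X_mul_adjugatePoly A (n - (k + 1)),
      show n - k = n - (k + 1) + 1 by lia, coeff_X_mul]

theorem trace_flSeq (A : Matrix (Fin n) (Fin n) R) (hk : k ≤ n) :
    (flSeq A k).trace = (n - k) * A.charpoly.coeff (n - k) := by
  rw [flSeq_eq_coeff_X_mul_adjugatePoly A hk, trace_coeff_X_mul_adjugatePoly, Nat.cast_sub hk]

theorem trace_mul_flSeq (A : Matrix (Fin n) (Fin n) R) (hk : k + 1 ≤ n) :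
    (A * flSeq A k).trace = -((k + 1) * A.charpoly.coeff (n - (k + 1))) := by
  have trace_succ := trace_flSeq A hk
  rw [flSeq, Matrix.trace_add, Matrix.trace_smul, Matrix.trace_one, Fintype.card_fin, smul_eq_mul,
    Nat.cast_succ] at trace_succ
  linear_combination trace_succ

end FaddeevLeverrier

theorem stmt14_general {R : Type*} [CommRing R] {n : ℕ} (A : Matrix (Fin n) (Fin n) R) :
    ∀ k, 1 ≤ k → k ≤ n → (k : R) ∣ Matrix.trace (A * flSeq A (k - 1)) := by
  intro k hk hkn
  obtain ⟨k, rfl⟩ := Nat.exists_eq_add_of_le' hk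
  rw [Nat.add_sub_cancel, trace_mul_flSeq A hkn, Nat.cast_succ]
  exact (dvd_mul_right _ _).neg_right

theorem stmt14 {n : ℕ} (hn : 1 ≤ n) (A : Matrix (Fin n) (Fin n) ℤ) :
    ∀ k, 1 ≤ k → k ≤ n → (k : ℤ) ∣ Matrix.trace (A * flSeq A (k - 1)) :=
  stmt14_general A
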